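/- arXiv:2310.16157 — 3 statements merged into one kernel-verified Lean document; each statement's English description precedes it below -/
import Mathlib

section
/- Let x : F be a feature of the item, i.e. x ∈ A t₀ for some t₀ : T, and let P' = Function.update P x 0 be the ratings obtained by muting x (setting its rating to 0) while keeping all other ratings unchanged. If P x < 0 (x attacks the recommendation), then muting x strictly increases the predicted rating: r̂(P') > r̂(P). (Weak monotonicity, attack case, Proposition 2 of CA-FATA.) -/
/-- CA-FATA predicted rating. -/
noncomputable def predictedRating {T F : Type*} [Fintype T]
    (π : T → ℝ) (A : T → Finset F) (P : F → ℝ) : ℝ :=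
  ∑ t : T, π t * ((∑ a ∈ A t, P a) / ((A t).card : ℝ))

open scoped BigOperators in
theorem predictedRating_eq_sum_mul_expect {T F : Type*} [Fintype T]
    (π : T → ℝ) (A : T → Finset F) (P : F → ℝ) :
    predictedRating π A P = ∑ t, π t * 𝔼 a ∈ A t, P a := by
  simp only [predictedRating, Finset.expect_eq_sum_div_card]

theorem predictedRating_lt_predictedRating {T F : Type*} [Fintype T]
    {π : T → ℝ} {A : T → Finset F} {P Q : F → ℝ} {x : F} {t₀ : T}
    (hπ : 0 ≤ π) (hPQ : P ≤ Q) (hπt₀ : 0 < π t₀) (hx : x ∈ A t₀) (hPQx : P x < Q x) :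
    predictedRating π A P < predictedRating π A Q := by
  simp only [predictedRating_eq_sum_mul_expect]
  refine Finset.sum_lt_sum (fun t _ => ?_) ⟨t₀, Finset.mem_univ t₀, ?_⟩
  · exact mul_le_mul_of_nonneg_left (Finset.expect_le_expect fun a _ => hPQ a) (hπ t)
  · exact mul_lt_mul_of_pos_left
      (Finset.expect_lt_expect (fun a _ => hPQ a) ⟨x, hx, hPQx⟩) hπt₀

/-- Weak monotonicity, attack case (Proposition 2 of CA-FATA): if a feature `x`
of the item has negative rating (`x` attacks the recommendation), then muting
`x` (setting its rating to 0) strictly increases the predicted rating. -/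
theorem weak_monotonicity_attack {T F : Type*} [Fintype T] [Nonempty T]
    [DecidableEq F]
    (π : T → ℝ) (A : T → Finset F) (P : F → ℝ)
    (hAne : ∀ t, (A t).Nonempty)
    (hπ : ∀ t, 0 < π t)
    (x : F) (t₀ : T) (hx : x ∈ A t₀)
    (hP : P x < 0) :
    predictedRating π A (Function.update P x 0) > predictedRating π A P := by
  have hle : P ≤ Function.update P x 0 := le_update_self_iff.2 hP.le
  have hlt : P x < Function.update P x 0 x := by rwa [Function.update_self]
  exact predictedRating_lt_predictedRating (fun t => (hπ t).le) hle (hπ t₀) hx hlt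
end

section
/- Let x : F be a feature of the item, i.e. x ∈ A t₀ for some t₀ : T, and let P' = Function.update P x 0 be the ratings obtained by muting x (setting its rating to 0) while keeping all other ratings unchanged. If P x > 0 (x supports the recommendation), then muting x strictly decreases the predicted rating: r̂(P') < r̂(P). (Weak monotonicity, support case, Proposition 2 of CA-FATA.) -/
section

variable {T F : Type*} [Fintype T]

theorem predictedRating_add (π : T → ℝ) (A : T → Finset F) (P Q : F → ℝ) :
    predictedRating π A (P + Q) = predictedRating π A P + predictedRating π A Q := by
  simp only [predictedRating, Pi.add_apply, Finset.sum_add_distrib, add_div, mul_add]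

variable [DecidableEq F] {π : T → ℝ} {A : T → Finset F} {x : F}

/-- The coefficient of the rating of the feature `x` in the predicted rating, which is a linear
form in the ratings. A feature may belong to several types, each of which contributes its
importance divided by its number of features. -/
noncomputable def featureWeight (π : T → ℝ) (A : T → Finset F) (x : F) : ℝ :=
  ∑ t with x ∈ A t, π t / (A t).card

theorem featureWeight_pos {t₀ : T} (hπ : ∀ t, 0 ≤ π t) (hπt₀ : 0 < π t₀) (hx : x ∈ A t₀) :
    0 < featureWeight π A x := by
  have card_pos : (0 : ℝ) < (A t₀).card := Nat.cast_pos.mpr (Finset.card_pos.mpr ⟨x, hx⟩)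
  refine Finset.sum_pos' (fun t _ => div_nonneg (hπ t) (Nat.cast_nonneg _)) ⟨t₀, ?_, ?_⟩
  · exact Finset.mem_filter.mpr ⟨Finset.mem_univ t₀, hx⟩
  · exact div_pos hπt₀ card_pos

theorem predictedRating_single (π : T → ℝ) (A : T → Finset F) (x : F) (c : ℝ) :
    predictedRating π A (Pi.single x c) = featureWeight π A x * c := by
  simp only [predictedRating, featureWeight, Finset.sum_pi_single', Finset.sum_filter,
    Finset.sum_mul]
  refine Finset.sum_congr rfl fun t _ => ?_
  split_ifs <;> ring

theorem predictedRating_update (π : T → ℝ) (A : T → Finset F) (P : F → ℝ) (x : F) (y : ℝ) :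
    predictedRating π A (Function.update P x y) =
      predictedRating π A P + featureWeight π A x * (y - P x) := by
  have update_eq : Function.update P x y = P + Pi.single x (y - P x) := by
    ext a
    obtain rfl | hne := eq_or_ne a x
    · simp
    · simp [hne]
  rw [update_eq, predictedRating_add, predictedRating_single]

theorem predictedRating_update_lt_iff (hx : 0 < featureWeight π A x) (P : F → ℝ) (y : ℝ) :
    predictedRating π A (Function.update P x y) < predictedRating π A P ↔ y < P x := by
  rw [predictedRating_update, add_lt_iff_neg_left, ← smul_eq_mul,
    smul_neg_iff_of_pos_left hx, sub_neg]

end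

/-- Weak monotonicity, support case (Proposition 2 of CA-FATA): if a feature `x`
of the item has positive rating (`x` supports the recommendation), then muting
`x` (setting its rating to 0) strictly decreases the predicted rating. -/
theorem weak_monotonicity_support {T F : Type*} [Fintype T] [Nonempty T]
    [DecidableEq F]
    (π : T → ℝ) (A : T → Finset F) (P : F → ℝ)
    (hAne : ∀ t, (A t).Nonempty)
    (hπ : ∀ t, 0 < π t)
    (x : F) (t₀ : T) (hx : x ∈ A t₀)
    (hP : P x > 0) :
    predictedRating π A (Function.update P x 0) < predictedRating π A P := by
  have weight_pos : 0 < featureWeight π A x :=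
    featureWeight_pos (fun t => (hπ t).le) (hπ t₀) hx
  exact (predictedRating_update_lt_iff weight_pos P 0).mpr hP
end

section
/- Let x : F be a feature of the item, i.e. x ∈ A t₀ for some t₀ : T, and let P' : F → ℝ be ratings with P' a = P a for every a ≠ x. If the rating of x is strictly decreased, P' x < P x, then the predicted rating of the item strictly decreases: r̂(P') < r̂(P). (Corollary 1 of CA-FATA, decreasing direction.) -/
theorem predictedRating_eq_sum_sigma {T F : Type*} [Fintype T]
    (π : T → ℝ) (A : T → Finset F) (P : F → ℝ) :
    predictedRating π A P =
      ∑ p ∈ Finset.univ.sigma A, π p.1 / ((A p.1).card : ℝ) * P p.2 := by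
  simp only [predictedRating, Finset.sum_sigma, Finset.mul_sum, Finset.sum_div, mul_div_assoc',
    div_mul_eq_mul_div]

theorem corollary_decrease_general {T F : Type*} [Fintype T]
    {π : T → ℝ} {A : T → Finset F} {P P' : F → ℝ}
    (hAne : ∀ t, (A t).Nonempty) (hπ : ∀ t, 0 ≤ π t)
    (hle : ∀ t, ∀ a ∈ A t, P' a ≤ P a)
    {x : F} {t₀ : T} (hx : x ∈ A t₀) (hπt₀ : 0 < π t₀) (hlt : P' x < P x) :
    predictedRating π A P' < predictedRating π A P := by
  have weight_nonneg (t : T) : 0 ≤ π t / ((A t).card : ℝ) :=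
    div_nonneg (hπ t) (Nat.cast_nonneg _)
  have weight_pos : 0 < π t₀ / ((A t₀).card : ℝ) :=
    div_pos hπt₀ (Nat.cast_pos.mpr (hAne t₀).card_pos)
  rw [predictedRating_eq_sum_sigma, predictedRating_eq_sum_sigma]
  refine Finset.sum_lt_sum (fun p hp ↦ ?_)
    ⟨⟨t₀, x⟩, Finset.mem_sigma.mpr ⟨Finset.mem_univ t₀, hx⟩, ?_⟩
  · exact mul_le_mul_of_nonneg_left (hle p.1 p.2 (Finset.mem_sigma.mp hp).2) (weight_nonneg p.1)
  · exact mul_lt_mul_of_pos_left hlt weight_pos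

/-- Corollary 1 of CA-FATA, decreasing direction: strictly decreasing the
rating of one feature `x` of the item (keeping the other ratings fixed)
strictly decreases the predicted rating of the item. -/
theorem corollary_decrease {T F : Type*} [Fintype T] [Nonempty T]
    (π : T → ℝ) (A : T → Finset F) (P P' : F → ℝ)
    (hAne : ∀ t, (A t).Nonempty)
    (hπ : ∀ t, 0 < π t)
    (x : F) (t₀ : T) (hx : x ∈ A t₀)
    (hagree : ∀ a : F, a ≠ x → P' a = P a)
    (hdec : P' x < P x) :
    predictedRating π A P' < predictedRating π A P := by
  have hle (a : F) : P' a ≤ P a :=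
    (eq_or_ne a x).elim (fun hax ↦ hax ▸ hdec.le) (fun hax ↦ (hagree a hax).le)
  exact corollary_decrease_general hAne (fun t ↦ (hπ t).le) (fun _ a _ ↦ hle a) hx (hπ t₀) hdec
end
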